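/- Let x(t) = Σ_{k=1}^K A_k(t) e^{2πi φ_k(t)} belong to the class 𝒟_{ε₁,ε₂}, let g, σ, Ṽ_x be as in the context, let 0 < τ₀ < 1 and let α > 0 solve |ĝ(α)| = τ₀. Define Λ₀(t) = K ε₁ I₁ + π ε₂ I₂ σ(t) Σ_{k=1}^K A_k(t), where I_n = ∫_ℝ |τ^n g(τ)| dτ. Fix t ∈ ℝ and suppose ε̃₁ satisfies ε̃₁ ≥ σ(t) Λ₀(t) + τ₀ Σ_{k=1}^K A_k(t). Then for every η with |Ṽ_x(t,η)| > ε̃₁ there exists k ∈ {1,…,K} such that |η − φ'_k(t)| < α/σ(t). -/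

import Mathlib

/-! At the fixed time `t`, freeze every component of `x` to the pure tone
`τ ↦ A_k(t) e(φ_k(t) + φ_k'(t) τ)`, where `e(θ) = exp(2πiθ)`.

The frozen signal has an explicit adaptive STFT: after `τ = σ(t) u` the `k`-th tone contributes
`A_k(t) e(φ_k(t)) ĝ(σ(t)(η - φ_k'(t)))`. If `|η - φ_k'(t)| ≥ α/σ(t)` for every `k`, then evenness
and monotonicity of `|ĝ|` (`ft_norm_le_of_le_abs`) bound this by `τ₀ A_k(t)`, so the frozen STFT has
modulus at most `τ₀ ∑ A_k(t)`.

The freezing error is controlled pointwise: the mean value inequality for `A_k`, the second order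
Taylor estimate `abs_taylor_two_le` for `φ_k` and the Lipschitz bound `norm_e2πi_sub_le` for `e` give
`‖x(t+τ) - frozen(τ)‖ ≤ K ε₁ |τ| + π ε₂ τ² ∑ A_k(t)` (`norm_tone_sub_le`, summed over `k`).
Integrating this against `|g(u)|` with `τ = σ(t) u` produces exactly `σ(t) Λ₀(t)`.

Hence `|Ṽ_x(t,η)| ≤ σ(t) Λ₀(t) + τ₀ ∑ A_k(t) ≤ ε̃₁` for every such `η`, which is the
contrapositive of the claim.
-/

open MeasureTheory Real Set Filter
open scoped Topology Real

noncomputable section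

/-- `e2πi θ = exp(2πiθ)`. -/
def e2πi (θ : ℝ) : ℂ := Complex.exp (2 * (π : ℂ) * (θ : ℂ) * Complex.I)

/-- Fourier transform with the convention `ŵ(ξ) = ∫ w(u) e^{-2πiξu} du`. -/
def ft (w : ℝ → ℂ) (ξ : ℝ) : ℂ := ∫ u : ℝ, w u * e2πi (-(ξ * u))

/-- The adaptive STFT with window `w` and time-varying parameter `σ`. -/
def adSTFT (σ : ℝ → ℝ) (w : ℝ → ℂ) (x : ℝ → ℂ) (t η : ℝ) : ℂ :=
  ∫ τ : ℝ, x (t + τ) * ((σ t : ℂ))⁻¹ * w (τ / σ t) * e2πi (-(η * τ))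

/-- Absolute moments `I_n = ∫ |τ^n w(τ)| dτ`. -/
def absMom (w : ℝ → ℂ) (n : ℕ) : ℝ := ∫ τ : ℝ, |τ| ^ n * ‖w τ‖

/-- The window `g₁(u) = u g(u)`. -/
def g1w (g : ℝ → ℂ) : ℝ → ℂ := fun u => (u : ℂ) * g u

/-- The window `g₂(u) = u² g(u)`. -/
def g2w (g : ℝ → ℂ) : ℝ → ℂ := fun u => (u : ℂ) ^ 2 * g u

/-- The window `g₃(u) = u g'(u)`. -/
def g3w (g : ℝ → ℂ) : ℝ → ℂ := fun u => (u : ℂ) * deriv g u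

/-- `∂_t` of the adaptive STFT. -/
def adSTFTt (σ : ℝ → ℝ) (w : ℝ → ℂ) (x : ℝ → ℂ) (t η : ℝ) : ℂ :=
  deriv (fun s => adSTFT σ w x s η) t

/-- `∂_η` of the adaptive STFT. -/
def adSTFTη (σ : ℝ → ℝ) (w : ℝ → ℂ) (x : ℝ → ℂ) (t η : ℝ) : ℂ :=
  deriv (fun η' => adSTFT σ w x t η') η

/-- The complex phase transformation `ω^{adp,c}` of the adaptive FSST. -/
def omegaC (σ : ℝ → ℝ) (g x : ℝ → ℂ) (t η : ℝ) : ℂ :=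
  adSTFTt σ g x t η / (2 * (π : ℂ) * Complex.I * adSTFT σ g x t η)
  + ((deriv σ t : ℝ) : ℂ) / (2 * (π : ℂ) * Complex.I * (σ t : ℂ))
  + ((deriv σ t / σ t : ℝ) : ℂ) * adSTFT σ (g3w g) x t η /
      (2 * (π : ℂ) * Complex.I * adSTFT σ g x t η)

/-- The (real) phase transformation `ω^{adp}` of the adaptive FSST. -/
def omegaAdp (σ : ℝ → ℝ) (g x : ℝ → ℂ) (t η : ℝ) : ℝ :=
  (adSTFTt σ g x t η / (2 * (π : ℂ) * Complex.I * adSTFT σ g x t η)).re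
  + (deriv σ t / σ t) *
      (adSTFT σ (g3w g) x t η / (2 * (π : ℂ) * Complex.I * adSTFT σ g x t η)).re

/-- The quantity `P₀(t,η)` of the second-order adaptive FSST. -/
def P0 (σ : ℝ → ℝ) (g x : ℝ → ℂ) (t η : ℝ) : ℂ :=
  (deriv (fun η' => adSTFTt σ g x t η' / adSTFT σ g x t η') η
    + ((deriv σ t / σ t : ℝ) : ℂ) *
        deriv (fun η' => adSTFT σ (g3w g) x t η' / adSTFT σ g x t η') η)
  / deriv (fun η' => adSTFT σ (g1w g) x t η' / adSTFT σ g x t η') η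

/-- The complex second-order phase transformation `ω^{adp,2nd,c}`. -/
def omega2C (σ : ℝ → ℝ) (g x : ℝ → ℂ) (t η : ℝ) : ℂ :=
  ((deriv σ t : ℝ) : ℂ) / (2 * (π : ℂ) * Complex.I * (σ t : ℂ))
  + adSTFTt σ g x t η / (2 * (π : ℂ) * Complex.I * adSTFT σ g x t η)
  - adSTFT σ (g1w g) x t η / (2 * (π : ℂ) * Complex.I * adSTFT σ g x t η) * P0 σ g x t η
  + ((deriv σ t / σ t : ℝ) : ℂ) * adSTFT σ (g3w g) x t η /
      (2 * (π : ℂ) * Complex.I * adSTFT σ g x t η)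

/-- The (real) second-order phase transformation `ω^{adp,2nd}`. -/
def omega2 (σ : ℝ → ℝ) (g x : ℝ → ℂ) (t η : ℝ) : ℝ := (omega2C σ g x t η).re

/-- The adaptive FSST `R^{adp,λ}_{x,γ}`. -/
def fsst (σ : ℝ → ℝ) (g x : ℝ → ℂ) (h : ℝ → ℝ) (γ lam t ξ : ℝ) : ℂ :=
  ∫ η in {η : ℝ | γ < ‖adSTFT σ g x t η‖},
    adSTFT σ g x t η * ((lam⁻¹ * h ((ξ - omegaAdp σ g x t η) / lam) : ℝ) : ℂ)

/-- The second-order adaptive FSST `R^{adp,2nd,λ}_{x,γ₁,γ₂}`. -/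
def fsst2 (σ : ℝ → ℝ) (g x : ℝ → ℂ) (h : ℝ → ℝ) (γ₁ γ₂ lam t ξ : ℝ) : ℂ :=
  ∫ η in {η : ℝ | γ₁ < ‖adSTFT σ g x t η‖ ∧
      γ₂ < ‖deriv (fun η' => adSTFT σ (g1w g) x t η' / adSTFT σ g x t η') η‖},
    adSTFT σ g x t η * ((lam⁻¹ * h ((ξ - omega2 σ g x t η) / lam) : ℝ) : ℂ)

/-- The chirp kernel `G^w_ℓ(t,η)` associated with linear phase `a` and chirp rate `b`. -/
def chirpG (σ : ℝ → ℝ) (w : ℝ → ℂ) (a b : ℝ) (t η : ℝ) : ℂ :=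
  ∫ τ : ℝ, e2πi (a * τ + b * τ ^ 2 / 2) * ((σ t : ℂ))⁻¹ * w (τ / σ t) * e2πi (-(η * τ))

/-- The Fourier transform of the chirped window `e^{iπru²} w(u)`. -/
def chirpFT (r : ℝ) (w : ℝ → ℂ) (ξ : ℝ) : ℂ :=
  ∫ u : ℝ, e2πi (r * u ^ 2 / 2) * w u * e2πi (-(ξ * u))

/-- The residual `err^w(t,η) = Ṽ^w_x(t,η) - Σ_ℓ x_ℓ(t) G^w_ℓ(t,η)`. -/
def errW (σ : ℝ → ℝ) (w : ℝ → ℂ) (K : ℕ) (A φ : Fin K → ℝ → ℝ) (x : ℝ → ℂ)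
    (t η : ℝ) : ℂ :=
  adSTFT σ w x t η - ∑ ℓ, (A ℓ t : ℂ) * e2πi (φ ℓ t) *
    chirpG σ w (deriv (φ ℓ) t) (deriv (deriv (φ ℓ)) t) t η

/-- The quantity `Err₁` of the second-order analysis. -/
def Err1 (σ : ℝ → ℝ) (g x : ℝ → ℂ) (K : ℕ) (A φ : Fin K → ℝ → ℝ) (k : Fin K)
    (t η : ℝ) : ℂ :=
  2 * (π : ℂ) * Complex.I *
      (∑ ℓ ∈ Finset.univ.erase k, (A ℓ t : ℂ) * e2πi (φ ℓ t) *
        ((deriv (φ ℓ) t - deriv (φ k) t : ℝ) : ℂ) *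
        chirpG σ g (deriv (φ ℓ) t) (deriv (deriv (φ ℓ)) t) t η)
  + 2 * (π : ℂ) * Complex.I * (σ t : ℂ) *
      (∑ ℓ ∈ Finset.univ.erase k, (A ℓ t : ℂ) * e2πi (φ ℓ t) *
        ((deriv (deriv (φ ℓ)) t - deriv (deriv (φ k)) t : ℝ) : ℂ) *
        chirpG σ (g1w g) (deriv (φ ℓ) t) (deriv (deriv (φ ℓ)) t) t η)
  + 2 * (π : ℂ) * Complex.I * ((η - deriv (φ k) t : ℝ) : ℂ) * errW σ g K A φ x t η
  - errW σ (deriv g) K A φ x t η / (σ t : ℂ)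
  - 2 * (π : ℂ) * Complex.I * ((deriv (deriv (φ k)) t : ℝ) : ℂ) * (σ t : ℂ) *
      errW σ (g1w g) K A φ x t η

/-- The quantity `Err₂` of the second-order analysis. -/
def Err2 (σ : ℝ → ℝ) (g x : ℝ → ℂ) (K : ℕ) (A φ : Fin K → ℝ → ℝ) (k : Fin K)
    (t η : ℝ) : ℂ :=
  4 * (π : ℂ) ^ 2 * (σ t : ℂ) *
      (∑ ℓ ∈ Finset.univ.erase k, (A ℓ t : ℂ) * e2πi (φ ℓ t) *
        ((deriv (φ ℓ) t - deriv (φ k) t : ℝ) : ℂ) *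
        chirpG σ (g1w g) (deriv (φ ℓ) t) (deriv (deriv (φ ℓ)) t) t η)
  + 4 * (π : ℂ) ^ 2 * (σ t : ℂ) ^ 2 *
      (∑ ℓ ∈ Finset.univ.erase k, (A ℓ t : ℂ) * e2πi (φ ℓ t) *
        ((deriv (deriv (φ ℓ)) t - deriv (deriv (φ k)) t : ℝ) : ℂ) *
        chirpG σ (g2w g) (deriv (φ ℓ) t) (deriv (deriv (φ ℓ)) t) t η)
  + 2 * (π : ℂ) * Complex.I * errW σ g K A φ x t η
  + 4 * (π : ℂ) ^ 2 * ((η - deriv (φ k) t : ℝ) : ℂ) * (σ t : ℂ) * errW σ (g1w g) K A φ x t η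
  + 2 * (π : ℂ) * Complex.I * errW σ (g3w g) K A φ x t η
  - 4 * (π : ℂ) ^ 2 * ((deriv (deriv (φ k)) t : ℝ) : ℂ) * (σ t : ℂ) ^ 2 *
      errW σ (g2w g) K A φ x t η

/-- The quantity `Err₃` of the second-order analysis. -/
def Err3 (σ : ℝ → ℝ) (g x : ℝ → ℂ) (K : ℕ) (A φ : Fin K → ℝ → ℝ) (k : Fin K)
    (t η : ℝ) : ℂ :=
  (adSTFT σ g x t η * Err2 σ g x K A φ k t η
    - adSTFTη σ g x t η * Err1 σ g x K A φ k t η)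
  / (adSTFT σ g x t η * adSTFTη σ (g1w g) x t η
    - adSTFT σ (g1w g) x t η * adSTFTη σ g x t η)

theorem e2πi_eq (θ : ℝ) : e2πi θ = Complex.exp (Complex.I * ((2 * π * θ : ℝ) : ℂ)) := by
  unfold e2πi; congr 1; push_cast; ring

theorem e2πi_add (a b : ℝ) : e2πi (a + b) = e2πi a * e2πi b := by
  unfold e2πi; rw [← Complex.exp_add]; congr 1; push_cast; ring

theorem norm_e2πi (θ : ℝ) : ‖e2πi θ‖ = 1 := by
  rw [e2πi_eq, mul_comm]; exact Complex.norm_exp_ofReal_mul_I _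

theorem continuous_e2πi : Continuous e2πi := by
  unfold e2πi; fun_prop

theorem norm_e2πi_sub_le (a b : ℝ) : ‖e2πi a - e2πi b‖ ≤ 2 * π * |a - b| := by
  have h : e2πi a - e2πi b = e2πi b * (e2πi (a - b) - 1) := by
    rw [mul_sub, ← e2πi_add]; simp
  rw [h, norm_mul, norm_e2πi, one_mul, e2πi_eq]
  refine Real.norm_exp_I_mul_ofReal_sub_one_le.trans ?_
  rw [Real.norm_eq_abs, abs_mul, abs_of_pos (by positivity)]

theorem abs_sub_le_of_abs_deriv_le {f : ℝ → ℝ} {ε : ℝ} (hf : Differentiable ℝ f)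
    (h : ∀ s, |deriv f s| ≤ ε) (t τ : ℝ) : |f (t + τ) - f t| ≤ ε * |τ| := by
  have := convex_univ.norm_image_sub_le_of_norm_deriv_le (f := f) (C := ε) (x := t) (y := t + τ)
    (fun s _ => hf s) (fun s _ => h s) (mem_univ _) (mem_univ _)
  simpa using this

/-- Second order Taylor estimate with remainder `ε τ² / 2`, for `τ` of either sign: the remainder
along the segment `s ↦ t + s τ`, `s ∈ [0,1]`, has derivative at most `ε τ² s`. -/
theorem abs_taylor_two_le {f : ℝ → ℝ} {ε : ℝ} (hf : ContDiff ℝ 2 f)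
    (h : ∀ s, |deriv (deriv f) s| ≤ ε) (t τ : ℝ) :
    |f (t + τ) - (f t + deriv f t * τ)| ≤ ε * τ ^ 2 / 2 := by
  have hd : Differentiable ℝ f := hf.differentiable (by norm_num)
  have hd2 : Differentiable ℝ (deriv f) :=
    ((contDiff_succ_iff_deriv (n := 1)).1 hf).2.2.differentiable (by norm_num)
  have hder : ∀ s : ℝ, HasDerivAt (fun s : ℝ => f (t + s * τ) - (f t + deriv f t * (s * τ)))
      ((deriv f (t + s * τ) - deriv f t) * τ) s := by
    intro s
    have h1 : HasDerivAt (fun s : ℝ => t + s * τ) τ s := by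
      simpa using ((hasDerivAt_id s).mul_const τ).const_add t
    have h2 := (hd (t + s * τ)).hasDerivAt.comp s h1
    have h3 : HasDerivAt (fun s : ℝ => f t + deriv f t * (s * τ)) (deriv f t * τ) s := by
      simpa using (((hasDerivAt_id s).mul_const τ).const_mul (deriv f t)).const_add (f t)
    exact (h2.sub h3).congr_deriv (by ring)
  have hB : ∀ s : ℝ, HasDerivAt (fun s : ℝ => ε * τ ^ 2 / 2 * s ^ 2) (ε * τ ^ 2 * s) s := by
    intro s
    exact ((hasDerivAt_pow 2 s).const_mul (ε * τ ^ 2 / 2)).congr_deriv (by push_cast; ring)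
  have key := image_norm_le_of_norm_deriv_right_le_deriv_boundary (a := 0) (b := 1)
    (fun s _ => (hder s).continuousAt.continuousWithinAt)
    (fun s _ => (hder s).hasDerivWithinAt) (by simp) hB
    (by
      intro s hs
      rw [Real.norm_eq_abs, abs_mul]
      have h1 := abs_sub_le_of_abs_deriv_le hd2 h t (s * τ)
      rw [abs_mul, abs_of_nonneg hs.1] at h1
      calc _ ≤ ε * (s * |τ|) * |τ| := by gcongr
        _ = ε * |τ| ^ 2 * s := by ring
        _ = _ := by rw [sq_abs])
    (right_mem_Icc.2 zero_le_one)
  simpa using key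

/-- Cost of replacing one component by the pure tone frozen at time `t`. -/
theorem norm_tone_sub_le {A φ : ℝ → ℝ} {ε₁ ε₂ : ℝ} (hA : Differentiable ℝ A)
    (hφ : ContDiff ℝ 2 φ) (hApos : ∀ s, 0 < A s) (hA' : ∀ s, |deriv A s| ≤ ε₁)
    (hφ'' : ∀ s, |deriv (deriv φ) s| ≤ ε₂) (t τ : ℝ) :
    ‖(A (t + τ) : ℂ) * e2πi (φ (t + τ)) - (A t : ℂ) * e2πi (φ t + deriv φ t * τ)‖
      ≤ ε₁ * |τ| + π * ε₂ * τ ^ 2 * A t := by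
  have hsplit : (A (t + τ) : ℂ) * e2πi (φ (t + τ)) - (A t : ℂ) * e2πi (φ t + deriv φ t * τ)
      = ((A (t + τ) - A t : ℝ) : ℂ) * e2πi (φ (t + τ))
        + (A t : ℂ) * (e2πi (φ (t + τ)) - e2πi (φ t + deriv φ t * τ)) := by
    push_cast; ring
  rw [hsplit]
  refine (norm_add_le _ _).trans (add_le_add ?_ ?_)
  · rw [norm_mul, norm_e2πi, mul_one, Complex.norm_real]
    exact abs_sub_le_of_abs_deriv_le hA hA' t τ
  · rw [norm_mul, Complex.norm_real, Real.norm_eq_abs, abs_of_pos (hApos t)]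
    have h0 := (hApos t).le
    calc _ ≤ A t * (2 * π * (ε₂ * τ ^ 2 / 2)) := by
          gcongr
          refine (norm_e2πi_sub_le _ _).trans ?_
          gcongr
          exact abs_taylor_two_le hφ hφ'' t τ
      _ = _ := by ring

theorem ft_norm_le_of_le_abs {w : ℝ → ℂ} (heven : ∀ ξ, ‖ft w (-ξ)‖ = ‖ft w ξ‖)
    (hdec : AntitoneOn (fun ξ => ‖ft w ξ‖) (Set.Ici 0)) {α ξ : ℝ} (hα : 0 ≤ α) (h : α ≤ |ξ|) :
    ‖ft w ξ‖ ≤ ‖ft w α‖ := by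
  have habs : ‖ft w |ξ|‖ = ‖ft w ξ‖ := by
    rcases abs_choice ξ with h | h <;> rw [h]
    exact heven ξ
  rw [← habs]
  exact hdec hα (hα.trans h) h

/-- The adaptive STFT in the rescaled variable `u = τ / σ(t)`. -/
theorem adSTFT_eq {σ : ℝ → ℝ} {w x : ℝ → ℂ} {t : ℝ} (hσ : 0 < σ t) (η : ℝ) :
    adSTFT σ w x t η = ∫ u : ℝ, x (t + σ t * u) * w u * e2πi (-(η * (σ t * u))) := by
  have hc : (σ t : ℂ) ≠ 0 := by exact_mod_cast hσ.ne'
  have h := Measure.integral_comp_div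
    (fun u : ℝ => (σ t : ℂ)⁻¹ * (x (t + σ t * u) * w u * e2πi (-(η * (σ t * u))))) (σ t)
  unfold adSTFT
  calc _ = ∫ τ : ℝ, (σ t : ℂ)⁻¹ * (x (t + σ t * (τ / σ t)) * w (τ / σ t)
        * e2πi (-(η * (σ t * (τ / σ t))))) := by
        refine integral_congr_ae (Eventually.of_forall fun τ => ?_)
        simp only [mul_div_cancel₀ τ hσ.ne']
        ring
    _ = _ := by
        rw [h, integral_const_mul, abs_of_pos hσ, Complex.real_smul, ← mul_assoc,
          mul_inv_cancel₀ hc, one_mul]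

theorem statement0
    (K : ℕ) (hK : 0 < K)
    (A φ : Fin K → ℝ → ℝ) (ε₁ ε₂ : ℝ) (hε₁ : 0 < ε₁) (hε₂pos : 0 < ε₂)
    (hA1 : ∀ k, ContDiff ℝ 1 (A k))
    (hAbdd : ∀ k, ∃ C, ∀ s, |A k s| ≤ C)
    (hφ2 : ∀ k, ContDiff ℝ 2 (φ k))
    (hApos : ∀ k s, 0 < A k s)
    (hφ'bd : ∀ k, ∃ c C : ℝ, 0 < c ∧ (∀ s, c ≤ deriv (φ k) s) ∧ ∀ s, deriv (φ k) s ≤ C)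
    (hA' : ∀ k s, |deriv (A k) s| ≤ ε₁)
    (hφ'' : ∀ k s, |deriv (deriv (φ k)) s| ≤ ε₂)
    (hsep : ∃ d, 0 < d ∧ ∀ (j : ℕ) (hj : j + 1 < K) (s : ℝ),
      d ≤ deriv (φ ⟨j + 1, hj⟩) s - deriv (φ ⟨j, Nat.lt_of_succ_lt hj⟩) s)
    (g : SchwartzMap ℝ ℂ) (hg0 : g 0 ≠ 0)
    (hghat_even : ∀ ξ, ‖ft (⇑g) (-ξ)‖ = ‖ft (⇑g) ξ‖)
    (hghat_dec : AntitoneOn (fun ξ => ‖ft (⇑g) ξ‖) (Set.Ici 0))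
    (σ : ℝ → ℝ) (hσ : ContDiff ℝ 1 σ) (hσpos : ∀ s, 0 < σ s)
    (x : ℝ → ℂ) (hx : ∀ s, x s = ∑ k, (A k s : ℂ) * e2πi (φ k s))
    (τ₀ α : ℝ) (hτ₀ : 0 < τ₀) (hτ₀1 : τ₀ < 1) (hαpos : 0 < α) (hαsol : ‖ft (⇑g) α‖ = τ₀)
    (Λ₀ : ℝ → ℝ)
    (hΛ₀ : ∀ s, Λ₀ s = K * ε₁ * absMom (⇑g) 1 + π * ε₂ * absMom (⇑g) 2 * σ s * ∑ k, A k s)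
    (t εtilde₁ : ℝ)
    (hεt₁ : σ t * Λ₀ t + τ₀ * ∑ k, A k t ≤ εtilde₁) :
    ∀ η : ℝ, εtilde₁ < ‖adSTFT σ (⇑g) x t η‖ →
      ∃ k : Fin K, |η - deriv (φ k) t| < α / σ t := by
  intro η hη
  by_contra! hcon
  refine absurd hη (not_lt.2 (le_trans ?_ hεt₁))
  have hσt := hσpos t
  set a := σ t with ha
  have hAd : ∀ k, Differentiable ℝ (A k) := fun k => (hA1 k).differentiable (by norm_num)
  -- `M` is the integrand of the STFT of the frozen signal, `D` the integrand of the freezing error.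
  let M : ℝ → ℂ := fun u => ∑ k, (A k t : ℂ) * e2πi (φ k t) *
    (g u * e2πi (-(a * (η - deriv (φ k) t) * u)))
  let D : ℝ → ℂ := fun u => (∑ k, ((A k (t + a * u) : ℂ) * e2πi (φ k (t + a * u))
    - (A k t : ℂ) * e2πi (φ k t + deriv (φ k) t * (a * u)))) * g u * e2πi (-(η * (a * u)))
  have hsplit : ∀ u, x (t + a * u) * g u * e2πi (-(η * (a * u))) = D u + M u := by
    intro u
    have hM : M u = (∑ k, (A k t : ℂ) * e2πi (φ k t + deriv (φ k) t * (a * u)))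
        * g u * e2πi (-(η * (a * u))) := by
      simp only [M, Finset.sum_mul]
      refine Finset.sum_congr rfl fun k _ => ?_
      have h1 : -(a * (η - deriv (φ k) t) * u)
          = deriv (φ k) t * (a * u) + -(η * (a * u)) := by ring
      rw [h1, e2πi_add, e2πi_add]
      ring
    rw [hM, hx]
    simp only [D, Finset.sum_sub_distrib]
    ring
  have hgi : ∀ k : Fin K, Integrable
      (fun u => g u * e2πi (-(a * (η - deriv (φ k) t) * u))) := by
    intro k
    refine g.integrable.norm.mono'
      (g.continuous.mul (continuous_e2πi.comp (by fun_prop))).aestronglyMeasurable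
      (Eventually.of_forall fun u => ?_)
    rw [norm_mul, norm_e2πi, mul_one]
  have hMi : Integrable M := integrable_finsetSum _ fun k _ => (hgi k).const_mul _
  have hMbound : ‖∫ u, M u‖ ≤ τ₀ * ∑ k, A k t := by
    have h1 : ∫ u, M u = ∑ k, (A k t : ℂ) * e2πi (φ k t) *
        ft (⇑g) (a * (η - deriv (φ k) t)) := by
      simp only [M]
      rw [integral_finsetSum _ fun k _ => (hgi k).const_mul _]
      refine Finset.sum_congr rfl fun k _ => ?_
      rw [integral_const_mul]; rfl
    rw [h1, Finset.mul_sum]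
    refine norm_sum_le_of_le _ fun k _ => ?_
    rw [norm_mul, norm_mul, norm_e2πi, mul_one, Complex.norm_real, Real.norm_eq_abs,
      abs_of_pos (hApos k t), mul_comm τ₀]
    refine mul_le_mul_of_nonneg_left ?_ (hApos k t).le
    rw [← hαsol]
    refine ft_norm_le_of_le_abs hghat_even hghat_dec hαpos.le ?_
    rw [abs_mul, abs_of_pos hσt, mul_comm]
    exact (div_le_iff₀ hσt).1 (hcon k)
  let B : ℝ → ℝ := fun u => K * ε₁ * a * (|u| ^ 1 * ‖g u‖)
    + π * ε₂ * a ^ 2 * (∑ k, A k t) * (|u| ^ 2 * ‖g u‖)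
  have hDB : ∀ u, ‖D u‖ ≤ B u := by
    intro u
    simp only [D, B]
    rw [norm_mul, norm_mul, norm_e2πi, mul_one]
    calc _ ≤ (∑ k, (ε₁ * |a * u| + π * ε₂ * (a * u) ^ 2 * A k t)) * ‖g u‖ := by
          gcongr
          exact norm_sum_le_of_le _ fun k _ =>
            norm_tone_sub_le (hAd k) (hφ2 k) (hApos k) (hA' k) (hφ'' k) t (a * u)
      _ = _ := by
          rw [Finset.sum_add_distrib, ← Finset.mul_sum, ← Finset.mul_sum, abs_mul, abs_of_pos hσt, sq_abs]
          simp
          ring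
  have hI : ∀ n : ℕ, Integrable (fun u : ℝ => |u| ^ n * ‖g u‖) := fun n => by
    simpa using g.integrable_pow_mul volume n
  have hBi : Integrable B := ((hI 1).const_mul _).add ((hI 2).const_mul _)
  have hDc : Continuous D := by
    have hA : ∀ k, Continuous (A k) := fun k => (hA1 k).continuous
    have hφ : ∀ k, Continuous (φ k) := fun k => (hφ2 k).continuous
    have hg : Continuous g := g.continuous
    have he := continuous_e2πi
    simp only [D]
    fun_prop
  have hDi : Integrable D :=
    hBi.mono' hDc.aestronglyMeasurable (Eventually.of_forall hDB)
  have hDbound : ‖∫ u, D u‖ ≤ a * Λ₀ t := by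
    refine (norm_integral_le_of_norm_le hBi (Eventually.of_forall hDB)).trans (le_of_eq ?_)
    simp only [B]
    rw [integral_add ((hI 1).const_mul _) ((hI 2).const_mul _), integral_const_mul,
      integral_const_mul, hΛ₀]
    simp only [absMom, ← ha]
    ring
  rw [adSTFT_eq hσt, ← ha, integral_congr_ae (Eventually.of_forall hsplit), integral_add hDi hMi]
  exact (norm_add_le _ _).trans (add_le_add hDbound hMbound)

end
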